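/- Let ρ > 0, σ > 0, h(ξ) = ∫_ξ^∞ erfc(η) dη, φ_a(ξ) = (ρσ/2)·(√h(ξ/σ) − √h(−ξ/σ))², and define the annealed cumulant generating function per unit √t by M_a(λ) = sup_{ξ∈ℝ} (λξ − φ_a(ξ)). Then lim_{λ→0} ( M_a(λ) − σλ²/(2ρ√π) ) / λ⁴ = σ·(4/π − 1)/(8√π·ρ³). Equivalently, the fourth cumulant of the tracer position in the annealed setting is ⟨x(t)⁴⟩_c = (σ/ρ³)·(4/π − 1)·(3/√π)·√t. -/

import Mathlib

open MeasureTheory Real Filter Topology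

/-- The complementary error function `erfc(x) = (2/√π) ∫_x^∞ e^{−u²} du`. -/
noncomputable def erfc (x : ℝ) : ℝ := (2 / Real.sqrt π) * ∫ u in Set.Ioi x, Real.exp (-u ^ 2)

/-- `h(ξ) = ∫_ξ^∞ erfc(η) dη`. -/
noncomputable def hfun (ξ : ℝ) : ℝ := ∫ η in Set.Ioi ξ, erfc η

/-- The annealed large deviation function
`φ_a(ξ) = (ρσ/2)(√h(ξ/σ) − √h(−ξ/σ))²`. -/
noncomputable def φa (ρ σ ξ : ℝ) : ℝ :=
  (ρ * σ / 2) * (Real.sqrt (hfun (ξ / σ)) - Real.sqrt (hfun (-ξ / σ))) ^ 2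

/-- The annealed cumulant generating function per unit `√t`,
`M_a(λ) = sup_ξ (λξ − φ_a(ξ))`. -/
noncomputable def Ma (ρ σ l : ℝ) : ℝ := ⨆ ξ : ℝ, (l * ξ - φa ρ σ ξ)

lemma gauss_int : Integrable (fun u : ℝ => Real.exp (-u ^ 2)) := by
  simpa using integrable_exp_neg_mul_sq (b := 1) one_pos

lemma erfc_eq (x : ℝ) : erfc x = 1 - (2 / √π) * ∫ u in (0:ℝ)..x, Real.exp (-u ^ 2) := by
  have h0 : ∫ u in Set.Ioi (0:ℝ), Real.exp (-u ^ 2) = √π / 2 := by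
    simpa using integral_gaussian_Ioi 1
  have h1 := intervalIntegral.integral_interval_add_Ioi (a := 0) (b := x)
    (f := fun u : ℝ => Real.exp (-u ^ 2)) (μ := volume)
    gauss_int.integrableOn gauss_int.integrableOn
  have hq : √π ≠ 0 := by positivity
  unfold erfc
  have h2 : ∫ u in Set.Ioi x, Real.exp (-u ^ 2)
      = √π / 2 - ∫ u in (0:ℝ)..x, Real.exp (-u ^ 2) := by linarith
  rw [h2]; field_simp

lemma erfc_deriv (x : ℝ) : HasDerivAt erfc (-(2 / √π * Real.exp (-x ^ 2))) x := by
  have h : HasDerivAt (fun x : ℝ => ∫ u in (0:ℝ)..x, Real.exp (-u ^ 2)) (Real.exp (-x ^ 2)) x := by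
    have hc : Continuous fun u : ℝ => Real.exp (-u ^ 2) := by fun_prop
    exact intervalIntegral.integral_hasDerivAt_right (hc.intervalIntegrable _ _)
      (hc.stronglyMeasurableAtFilter _ _) hc.continuousAt
  have := (h.const_mul (2 / √π)).const_sub 1
  exact this.congr_of_eventuallyEq (Eventually.of_forall erfc_eq)

lemma erfc_nonneg (x : ℝ) : 0 ≤ erfc x := by
  unfold erfc
  have : 0 ≤ ∫ u in Set.Ioi x, Real.exp (-u ^ 2) := integral_nonneg fun u => (Real.exp_pos _).le
  positivity

lemma erfc_zero : erfc 0 = 1 := by rw [erfc_eq]; simp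

lemma erfc_add (x : ℝ) : erfc x + erfc (-x) = 2 := by
  have := intervalIntegral.integral_comp_neg (a := 0) (b := x) (fun u : ℝ => Real.exp (-u ^ 2))
  rw [erfc_eq, erfc_eq, intervalIntegral.integral_symm (-x) 0]
  simp at this
  rw [← this]; ring

lemma mul_erfc_le (x : ℝ) (hx : 0 ≤ x) : x * erfc x ≤ Real.exp (-x ^ 2) / √π := by
  have hd : ∀ u ∈ Set.Ici x, HasDerivAt (fun u : ℝ => -(Real.exp (-u ^ 2)) / 2)
      (u * Real.exp (-u ^ 2)) u := by
    intro u _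
    have := ((((hasDerivAt_id u).pow 2).neg.exp).neg).div_const 2
    refine HasDerivAt.congr_deriv this ?_
    simp; try ring
  have hlim : Tendsto (fun u : ℝ => -(Real.exp (-u ^ 2)) / 2) atTop (𝓝 0) := by
    have h : Tendsto (fun u : ℝ => Real.exp (-u ^ 2)) atTop (𝓝 0) :=
      Real.tendsto_exp_atBot.comp (tendsto_neg_atTop_atBot.comp (tendsto_pow_atTop two_ne_zero))
    simpa using h.neg.div_const 2
  have hpos : ∀ u ∈ Set.Ioi x, 0 ≤ u * Real.exp (-u ^ 2) := fun u hu =>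
    mul_nonneg (hx.trans (le_of_lt hu)) (Real.exp_pos _).le
  have hi := integrableOn_Ioi_deriv_of_nonneg' hd hpos hlim
  have he := integral_Ioi_of_hasDerivAt_of_nonneg' hd hpos hlim
  have hle : ∫ u in Set.Ioi x, x * Real.exp (-u ^ 2) ≤ ∫ u in Set.Ioi x, u * Real.exp (-u ^ 2) := by
    apply setIntegral_mono_on (gauss_int.const_mul x).integrableOn hi measurableSet_Ioi
    intro u hu
    exact mul_le_mul_of_nonneg_right (le_of_lt hu) (Real.exp_pos _).le
  rw [integral_const_mul, he] at hle
  unfold erfc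
  calc x * (2 / √π * ∫ u in Set.Ioi x, Real.exp (-u ^ 2))
      = 2 / √π * (x * ∫ u in Set.Ioi x, Real.exp (-u ^ 2)) := by ring
    _ ≤ 2 / √π * (0 - -(Real.exp (-x ^ 2)) / 2) := by gcongr
    _ = _ := by ring

lemma exp_sq_lim : Tendsto (fun u : ℝ => Real.exp (-u ^ 2) / √π) atTop (𝓝 0) := by
  have h : Tendsto (fun u : ℝ => Real.exp (-u ^ 2)) atTop (𝓝 0) :=
    Real.tendsto_exp_atBot.comp (tendsto_neg_atTop_atBot.comp (tendsto_pow_atTop two_ne_zero))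
  simpa using h.div_const (√π)

lemma hfun_eq (x : ℝ) : hfun x = Real.exp (-x ^ 2) / √π - x * erfc x := by
  have hd : ∀ u ∈ Set.Ici x, HasDerivAt (fun u : ℝ => u * erfc u - Real.exp (-u ^ 2) / √π)
      (erfc u) u := by
    intro u _
    have := ((hasDerivAt_id u).mul (erfc_deriv u)).sub
      ((((hasDerivAt_id u).pow 2).neg.exp).div_const (√π))
    refine HasDerivAt.congr_deriv this ?_
    simp; try ring
  have hlim : Tendsto (fun u : ℝ => u * erfc u - Real.exp (-u ^ 2) / √π) atTop (𝓝 0) := by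
    have h : Tendsto (fun u : ℝ => u * erfc u) atTop (𝓝 0) := by
      refine tendsto_of_tendsto_of_tendsto_of_le_of_le' tendsto_const_nhds exp_sq_lim ?_ ?_
      · filter_upwards [eventually_ge_atTop 0] with u hu using mul_nonneg hu (erfc_nonneg u)
      · filter_upwards [eventually_ge_atTop 0] with u hu using mul_erfc_le u hu
    simpa using h.sub exp_sq_lim
  have he := integral_Ioi_of_hasDerivAt_of_nonneg' hd (fun u _ => erfc_nonneg u) hlim
  unfold hfun
  rw [he]; ring

lemma hfun_nonneg (x : ℝ) : 0 ≤ hfun x := integral_nonneg fun u => erfc_nonneg u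

lemma hfun_deriv (x : ℝ) : HasDerivAt hfun (-erfc x) x := by
  have h : HasDerivAt (fun u : ℝ => Real.exp (-u ^ 2) / √π - u * erfc u) (-erfc x) x := by
    have := ((((hasDerivAt_id x).pow 2).neg.exp).div_const (√π)).sub
      ((hasDerivAt_id x).mul (erfc_deriv x))
    refine HasDerivAt.congr_deriv this ?_
    simp; try ring
  exact h.congr_of_eventuallyEq (Eventually.of_forall hfun_eq)

lemma hfun_zero : hfun 0 = 1 / √π := by rw [hfun_eq]; simp

lemma hfun_sub (x : ℝ) : hfun (-x) - hfun x = 2 * x := by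
  rw [hfun_eq, hfun_eq]
  have := erfc_add x
  simp only [neg_sq]
  linear_combination x * this

lemma hfun_add_le (x : ℝ) : hfun x + hfun (-x) ≤ 2 / √π + 2 * |x| := by
  rw [hfun_eq, hfun_eq]
  simp only [neg_sq]
  have h1 := erfc_add x
  have h2 := erfc_nonneg x
  have h3 := erfc_nonneg (-x)
  have h4 : Real.exp (-x ^ 2) ≤ 1 := Real.exp_le_one_iff.2 (by nlinarith [sq_nonneg x])
  have h5 : Real.exp (-x ^ 2) / √π ≤ 1 / √π := by gcongr
  have h6 : x * (erfc (-x) - erfc x) ≤ |x| * 2 := by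
    refine (le_abs_self _).trans ?_
    rw [abs_mul]
    gcongr
    rw [abs_le]; constructor <;> linarith
  have : 2 / √π = 1 / √π + 1 / √π := by ring
  linarith

noncomputable def Ff (x : ℝ) : ℝ := (√(hfun x) - √(hfun (-x))) ^ 2

lemma hprod (x : ℝ) :
    Ff x * (√(hfun x) + √(hfun (-x))) ^ 2 = 4 * x ^ 2 := by
  have ha := Real.sq_sqrt (hfun_nonneg x)
  have hb := Real.sq_sqrt (hfun_nonneg (-x))
  have hs := hfun_sub x
  unfold Ff
  have : (√(hfun x) - √(hfun (-x))) * (√(hfun x) + √(hfun (-x))) = - (2 * x) := by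
    linear_combination ha - hb - hs
  rw [← mul_pow, this]; ring

lemma Ff_lower (x : ℝ) : x ^ 2 ≤ Ff x * (1 + |x|) := by
  have ha := Real.sq_sqrt (hfun_nonneg x)
  have hb := Real.sq_sqrt (hfun_nonneg (-x))
  have h := hprod x
  have hF : 0 ≤ Ff x := sq_nonneg _
  have hq : 1 / √π ≤ 1 := by
    rw [div_le_one (by positivity)]
    exact Real.one_le_sqrt.2 (by linarith [Real.pi_gt_three])
  have h2 := hfun_add_le x
  have h3 : (√(hfun x) + √(hfun (-x))) ^ 2 ≤ 4 * (1 + |x|) := by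
    have : 2 / √π = 2 * (1 / √π) := by ring
    nlinarith [sq_nonneg (√(hfun x) - √(hfun (-x)))]
  nlinarith [mul_le_mul_of_nonneg_left h3 hF]

lemma s_lim : Tendsto (fun x => (hfun x + hfun (-x) - 2 / √π) / x ^ 2) (𝓝[≠] 0) (𝓝 (2 / √π)) := by
  have hd : ∀ x, HasDerivAt (fun x => hfun x + hfun (-x) - 2 / √π) (erfc (-x) - erfc x) x := by
    intro x
    have := ((hfun_deriv x).add ((hfun_deriv (-x)).comp x (hasDerivAt_neg x))).sub_const (2 / √π)
    refine HasDerivAt.congr_deriv this ?_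
    ring
  have hd2 : HasDerivAt (fun x => erfc (-x) - erfc x) (4 / √π) 0 := by
    have h1 : HasDerivAt erfc (-(2 / √π * Real.exp (-(-0) ^ 2))) (-0) := erfc_deriv (-0)
    have := (h1.comp (0:ℝ) (hasDerivAt_neg 0)).sub (erfc_deriv 0)
    refine HasDerivAt.congr_deriv this ?_
    simp; try ring
  have hsl := hasDerivAt_iff_tendsto_slope.1 hd2
  refine HasDerivAt.lhopital_zero_nhdsNE (f' := fun x => erfc (-x) - erfc x) (g' := fun x => 2 * x)
    (Eventually.of_forall hd) (Eventually.of_forall fun x => ?_) ?_ ?_ ?_ ?_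
  · simpa using hasDerivAt_pow 2 x
  · filter_upwards [self_mem_nhdsWithin] with x hx
    simpa using hx
  · have := (hd 0).continuousAt.tendsto.mono_left (nhdsWithin_le_nhds (s := {0}ᶜ))
    convert this using 2
    simp [hfun_zero]; ring
  · have : Tendsto (fun x : ℝ => x ^ 2) (𝓝 0) (𝓝 (0 ^ 2)) := (continuous_pow 2).tendsto 0
    simpa using this.mono_left nhdsWithin_le_nhds
  · have := hsl.div_const 2
    refine (this.congr' ?_).trans (le_of_eq ?_)
    · filter_upwards [self_mem_nhdsWithin] with x hx
      have : x ≠ 0 := hx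
      simp [slope_def_field]; field_simp
    · congr 1; ring

lemma hfun_cont : Continuous hfun :=
  continuous_iff_continuousAt.2 fun x => (hfun_deriv x).continuousAt

lemma Ff_lim : Tendsto (fun x => (Ff x - √π * x ^ 2) / x ^ 4) (𝓝[≠] 0)
    (𝓝 (-(√π * (1 - π / 4)))) := by
  have hq : 0 < √π := by positivity
  have hqq : √π ^ 2 = π := Real.sq_sqrt Real.pi_pos.le
  have hz : 0 < hfun 0 := by rw [hfun_zero]; positivity
  have cs : Tendsto (fun x => hfun x + hfun (-x)) (𝓝[≠] 0) (𝓝 (2 / √π)) := by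
    have : Continuous fun x => hfun x + hfun (-x) := by
      have := hfun_cont; fun_prop
    have := (this.tendsto 0).mono_left (nhdsWithin_le_nhds (s := {0}ᶜ))
    convert this using 2
    simp [hfun_zero]; ring
  have cp : Tendsto (fun x => √(hfun x) * √(hfun (-x))) (𝓝[≠] 0) (𝓝 (1 / √π)) := by
    have : Continuous fun x => √(hfun x) * √(hfun (-x)) := by
      have := hfun_cont; fun_prop
    have := (this.tendsto 0).mono_left (nhdsWithin_le_nhds (s := {0}ᶜ))
    convert this using 2
    simp only [neg_zero]
    rw [Real.mul_self_sqrt hz.le, hfun_zero]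
  have pl : Tendsto (fun x => (√(hfun x) * √(hfun (-x)) - 1 / √π) / x ^ 2) (𝓝[≠] 0)
      (𝓝 ((2 / √π * (2 / √π + 2 / √π) / 4 - 1) / (1 / √π + 1 / √π))) := by
    have := (((s_lim.mul (cs.add_const (2 / √π))).div_const 4).sub_const 1).div
      (cp.add_const (1 / √π)) (by positivity)
    refine this.congr' ?_
    filter_upwards [self_mem_nhdsWithin] with x hx
    have hx : x ≠ 0 := hx
    have ha := Real.sq_sqrt (hfun_nonneg x)
    have hb := Real.sq_sqrt (hfun_nonneg (-x))
    have hs := hfun_sub x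
    have hp : 0 ≤ √(hfun x) * √(hfun (-x)) := by positivity
    have hp2 : (√(hfun x) * √(hfun (-x))) ^ 2 = hfun x * hfun (-x) := by rw [mul_pow, ha, hb]
    simp only [Pi.div_apply]
    set p := √(hfun x) * √(hfun (-x))
    have hne : p + 1 / √π ≠ 0 := by positivity
    rw [div_eq_div_iff hne (by positivity)]
    have e : hfun (-x) = hfun x + 2 * x := by linarith
    rw [e] at hp2 ⊢
    have hw : 2 / √π = 2 * (1 / √π) := by ring
    rw [hw]
    generalize 1 / √π = w
    field_simp
    linear_combination (-4) * hp2
  have den : Tendsto (fun x => hfun x + hfun (-x) + 2 * (√(hfun x) * √(hfun (-x)))) (𝓝[≠] 0)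
      (𝓝 (2 / √π + 2 * (1 / √π))) := cs.add (cp.const_mul 2)
  have main := ((s_lim.add (pl.const_mul 2)).const_mul (-√π)).div den (by positivity)
  refine (main.congr' ?_).trans (le_of_eq ?_)
  · filter_upwards [self_mem_nhdsWithin] with x hx
    have hx : x ≠ 0 := hx
    have ha := Real.sq_sqrt (hfun_nonneg x)
    have hb := Real.sq_sqrt (hfun_nonneg (-x))
    have hT := hprod x
    have hexp : (√(hfun x) + √(hfun (-x))) ^ 2
        = hfun x + hfun (-x) + 2 * (√(hfun x) * √(hfun (-x))) := by
      linear_combination ha + hb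
    rw [hexp] at hT
    simp only [Pi.div_apply]
    set D := hfun x + hfun (-x) + 2 * (√(hfun x) * √(hfun (-x))) with hD
    have hDne : D ≠ 0 := by
      intro h0; rw [h0] at hT
      have : 0 < x ^ 2 := by positivity
      linarith
    have e1 : (hfun x + hfun (-x) - 2 / √π) / x ^ 2
        + 2 * ((√(hfun x) * √(hfun (-x)) - 1 / √π) / x ^ 2) = (D - 4 / √π) / x ^ 2 := by
      rw [hD]; ring
    rw [e1]
    field_simp
    linear_combination -hT
  · congr 1
    have h4 : π = √π ^ 2 := hqq.symm
    generalize √π = q at *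
    rw [h4]
    field_simp
    ring

set_option maxHeartbeats 1000000 in
lemma legendre (f : ℝ → ℝ) (A B k : ℝ) (hA : 0 < A) (hk : 0 < k)
    (hf : ∀ x, k * x ^ 2 ≤ f x * (1 + |x|))
    (hl : Tendsto (fun x => (f x - A * x ^ 2) / x ^ 4) (𝓝[≠] 0) (𝓝 (-B))) :
    Tendsto (fun l => ((⨆ x, (l * x - f x)) - l ^ 2 / (4 * A)) / l ^ 4) (𝓝[≠] 0)
      (𝓝 (B / (16 * A ^ 4))) := by
  have hf0 : f 0 ≥ 0 := by simpa using hf 0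
  -- localization
  have loc : ∀ l x, |l| ≤ k / 2 → 0 < l * x - f x → |x| ≤ 2 * |l| / k := by
    intro l x hlk h
    have h1 : l * x ≤ |l| * |x| := by rw [← abs_mul]; exact le_abs_self _
    have h2 := hf x
    rw [← sq_abs] at h2
    have hx : 0 < |x| := by
      rw [abs_pos]; rintro rfl; linarith [hf0]
    have h3 : f x * (1 + |x|) ≤ |l| * |x| * (1 + |x|) := by
      gcongr; linarith
    have h4 : k * |x| ≤ |l| * (1 + |x|) := by
      have : |x| * (k * |x|) ≤ |x| * (|l| * (1 + |x|)) := by nlinarith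
      exact le_of_mul_le_mul_left this hx
    rw [le_div_iff₀ hk]
    nlinarith [mul_le_mul_of_nonneg_right hlk hx.le]
  have bdd : ∀ l, |l| ≤ k / 2 → BddAbove (Set.range fun x => l * x - f x) := by
    intro l hlk
    refine ⟨|l| * (2 * |l| / k), ?_⟩
    rintro _ ⟨x, rfl⟩
    by_cases h : 0 < l * x - f x
    · have h1 : l * x ≤ |l| * |x| := by rw [← abs_mul]; exact le_abs_self _
      have h2 := loc l x hlk h
      have h3 := hf x
      have h4 : 0 ≤ f x := by
        by_contra hc
        have : f x * (1 + |x|) < 0 := mul_neg_of_neg_of_pos (not_le.1 hc) (by positivity)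
        nlinarith [sq_nonneg x]
      have : |l| * |x| ≤ |l| * (2 * |l| / k) := by gcongr
      simp only; linarith
    · have : 0 ≤ |l| * (2 * |l| / k) := by positivity
      simp only; linarith
  have loc2 : ∀ ε > 0, ∃ δ > 0, ∀ x, x ≠ 0 → |x| < δ →
      |f x - A * x ^ 2 + B * x ^ 4| ≤ ε * x ^ 4 := by
    intro ε hε
    have := Metric.tendsto_nhdsWithin_nhds.1 hl ε hε
    obtain ⟨δ, hδ, H⟩ := this
    refine ⟨δ, hδ, fun x hx hxd => ?_⟩
    have h := H (x := x) hx (by simpa using hxd)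
    rw [Real.dist_eq] at h
    have hx4 : 0 < x ^ 4 := by positivity
    have e : f x - A * x ^ 2 + B * x ^ 4 = ((f x - A * x ^ 2) / x ^ 4 - -B) * x ^ 4 := by
      field_simp; ring
    rw [e, abs_mul, abs_of_pos hx4]
    gcongr
  rw [Metric.tendsto_nhdsWithin_nhds]
  intro ε hε
  -- constants
  set K : ℝ := 2 / k + 1 / (2 * A) with hK
  have hKpos : 0 < K := by positivity
  obtain ⟨δ, hδ, H⟩ := loc2 (ε / 4 / K ^ 4) (by positivity)
  set C : ℝ := (|B| * (4 * K ^ 3)) ^ 2 / (4 * A) with hC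
  have hC0 : 0 ≤ C := by positivity
  set E : ℝ := |B| / (16 * A ^ 4) with hE
  have hE0 : 0 ≤ E := by positivity
  set δ' : ℝ := min (min (k / 2) (δ / K)) (min (min 1 (ε / (4 * (C + 1)))) (1 / (4 * A * (E + 1))))
    with hδ'
  refine ⟨δ', by positivity, ?_⟩
  intro l hl0 hld
  have hl0 : l ≠ 0 := hl0
  have hld : |l| < δ' := by simpa using hld
  have hd1 : |l| < k / 2 := hld.trans_le ((min_le_left _ _).trans (min_le_left _ _))
  have hd2 : |l| < δ / K := hld.trans_le ((min_le_left _ _).trans (min_le_right _ _))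
  have hd3 : |l| < 1 := hld.trans_le
    ((min_le_right _ _).trans ((min_le_left _ _).trans (min_le_left _ _)))
  have hd4 : |l| < ε / (4 * (C + 1)) := hld.trans_le
    ((min_le_right _ _).trans ((min_le_left _ _).trans (min_le_right _ _)))
  have hd5 : |l| < 1 / (4 * A * (E + 1)) := hld.trans_le
    ((min_le_right _ _).trans (min_le_right _ _))
  have hlp : 0 < |l| := abs_pos.2 hl0
  have hl2 : 0 < l ^ 2 := by positivity
  have hl4 : 0 < l ^ 4 := by positivity
  have hl2' : l ^ 2 ≤ |l| := by rw [← sq_abs]; nlinarith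
  have hKl : K * |l| < δ := by rw [lt_div_iff₀ hKpos] at hd2; linarith
  -- near expansions
  have near : ∀ x, |x| ≤ K * |l| → x ≠ 0 → |f x - A * x ^ 2 + B * x ^ 4| ≤ ε / 4 * l ^ 4 := by
    intro x hx hx0
    refine (H x hx0 (hx.trans_lt hKl)).trans ?_
    have : x ^ 4 ≤ K ^ 4 * l ^ 4 := by
      have := pow_le_pow_left₀ (abs_nonneg x) hx 4
      rwa [mul_pow, Even.pow_abs (by decide), Even.pow_abs (by decide)] at this
    calc ε / 4 / K ^ 4 * x ^ 4 ≤ ε / 4 / K ^ 4 * (K ^ 4 * l ^ 4) := by gcongr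
      _ = _ := by field_simp
  set y : ℝ := l / (2 * A) with hy
  have hyK : |y| ≤ K * |l| := by
    rw [hy, abs_div, abs_of_pos (show 0 < 2 * A by positivity), hK]
    have : 0 ≤ 2 / k * |l| := by positivity
    have e : |l| / (2 * A) = 1 / (2 * A) * |l| := by ring
    rw [e]; linarith
  have hy0 : y ≠ 0 := by positivity
  have hBy : B / (16 * A ^ 4) * l ^ 4 = B * y ^ 4 := by rw [hy]; field_simp; ring
  have hAy : ∀ x, l * x - A * x ^ 2 = l ^ 2 / (4 * A) - A * (x - y) ^ 2 := by
    intro x; rw [hy]; field_simp; ring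
  -- lower bound
  have lower : l ^ 2 / (4 * A) + B * y ^ 4 - ε / 4 * l ^ 4 ≤ ⨆ x, (l * x - f x) := by
    refine le_trans ?_ (le_ciSup (bdd l hd1.le) y)
    have h1 := (abs_le.1 (near y hyK hy0)).2
    have h2 := hAy y
    simp at h2
    linarith
  have hCl : C * l ^ 6 ≤ ε / 4 * l ^ 4 := by
    have h1 : C * l ^ 2 ≤ ε / 4 := by
      rw [lt_div_iff₀ (by positivity)] at hd4
      nlinarith
    calc C * l ^ 6 = C * l ^ 2 * l ^ 4 := by ring
      _ ≤ _ := by gcongr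
  have upper : ⨆ x, (l * x - f x) ≤ l ^ 2 / (4 * A) + B * y ^ 4 + ε / 2 * l ^ 4 := by
    apply ciSup_le
    have hnn : 0 ≤ l ^ 2 / (4 * A) + B * y ^ 4 + ε / 2 * l ^ 4 := by
      rw [← hBy]
      have hb : -E ≤ B / (16 * A ^ 4) := by
        rw [hE, ← neg_div]; gcongr; exact neg_abs_le B
      have h1 : E * l ^ 2 ≤ 1 / (4 * A) := by
        rw [lt_div_iff₀ (by positivity)] at hd5
        rw [le_div_iff₀ (by positivity)]
        have : l ^ 2 * (4 * A * (E + 1)) ≤ |l| * (4 * A * (E + 1)) := by gcongr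
        nlinarith [mul_pos hA hl2]
      have h2 : E * l ^ 4 ≤ l ^ 2 / (4 * A) := by
        calc E * l ^ 4 = E * l ^ 2 * l ^ 2 := by ring
          _ ≤ 1 / (4 * A) * l ^ 2 := by gcongr
          _ = _ := by ring
      have h3 : -E * l ^ 4 ≤ B / (16 * A ^ 4) * l ^ 4 := by gcongr
      have h4 : 0 < ε / 2 * l ^ 4 := by positivity
      linarith
    intro x
    by_cases hx : 0 < l * x - f x
    · have hx0 : x ≠ 0 := by rintro rfl; linarith [hf0]
      have hxK : |x| ≤ K * |l| := by
        refine (loc l x hd1.le hx).trans ?_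
        rw [hK]
        have : 0 ≤ 1 / (2 * A) * |l| := by positivity
        have e : 2 * |l| / k = 2 / k * |l| := by ring
        rw [e]; linarith
      have h1 := (abs_le.1 (near x hxK hx0)).1
      have h2 := hAy x
      have h3 : B * (x ^ 4 - y ^ 4) ≤ A * (x - y) ^ 2 + C * l ^ 6 := by
        set m := K * |l| with hm
        have hm0 : 0 ≤ m := by positivity
        have e1 : |x ^ 3 + x ^ 2 * y + x * y ^ 2 + y ^ 3| ≤ 4 * m ^ 3 := by
          have t1 : |x ^ 3| ≤ m ^ 3 := by rw [abs_pow]; gcongr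
          have t2 : |x ^ 2 * y| ≤ m ^ 2 * m := by rw [abs_mul, abs_pow]; gcongr
          have t3 : |x * y ^ 2| ≤ m * m ^ 2 := by rw [abs_mul, abs_pow]; gcongr
          have t4 : |y ^ 3| ≤ m ^ 3 := by rw [abs_pow]; gcongr
          refine (abs_add_le _ _).trans ?_
          refine (add_le_add_left (abs_add_le _ _) _).trans ?_
          refine (add_le_add_left (add_le_add_left (abs_add_le _ _) _) _).trans ?_
          linarith
        have e2 : B * (x ^ 4 - y ^ 4) ≤ |B| * (4 * m ^ 3) * |x - y| := by
          have : B * (x ^ 4 - y ^ 4)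
              = B * (x ^ 3 + x ^ 2 * y + x * y ^ 2 + y ^ 3) * (x - y) := by ring
          rw [this]
          refine (le_abs_self _).trans ?_
          rw [abs_mul, abs_mul]; gcongr
        have e3 : C * l ^ 6 = (|B| * (4 * m ^ 3)) ^ 2 / (4 * A) := by
          have : l ^ 6 = |l| ^ 6 := (Even.pow_abs (by decide) l).symm
          rw [hC, hm, this]; ring
        rw [e3]
        refine e2.trans ?_
        rw [← sq_abs (x - y)]
        generalize |B| * (4 * m ^ 3) = c
        generalize |x - y| = d
        have : A * d ^ 2 + c ^ 2 / (4 * A) - c * d = (2 * A * d - c) ^ 2 / (4 * A) := by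
          field_simp; ring
        have : 0 ≤ (2 * A * d - c) ^ 2 / (4 * A) := by positivity
        linarith
      linarith
    · linarith
  rw [Real.dist_eq]
  have e : ((⨆ x, (l * x - f x)) - l ^ 2 / (4 * A)) / l ^ 4 - B / (16 * A ^ 4)
      = ((⨆ x, (l * x - f x)) - l ^ 2 / (4 * A) - B * y ^ 4) / l ^ 4 := by
    rw [← hBy]; field_simp
  rw [e, abs_div, abs_of_pos hl4, div_lt_iff₀ hl4, abs_lt]
  have : 0 < ε * l ^ 4 := by positivity
  constructor <;> linarith

/-- `lim_{λ→0} (M_a(λ) − σλ²/(2ρ√π))/λ⁴ = σ(4/π − 1)/(8√π ρ³)`: the fourth annealed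
cumulant of the tracer position is `(σ/ρ³)(4/π − 1)(3/√π)√t`. -/
theorem annealed_fourth_cumulant (ρ σ : ℝ) (hρ : 0 < ρ) (hσ : 0 < σ) :
    Tendsto (fun l : ℝ =>
        (Ma ρ σ l - σ * l ^ 2 / (2 * ρ * Real.sqrt π)) / l ^ 4)
      (𝓝[≠] 0) (nhds (σ * (4 / π - 1) / (8 * Real.sqrt π * ρ ^ 3))) := by
  have hq : 0 < √π := by positivity
  have hqq : √π ^ 2 = π := Real.sq_sqrt Real.pi_pos.le
  have key := legendre (fun x => ρ / 2 * Ff x) (ρ / 2 * √π) (ρ / 2 * (√π * (1 - π / 4))) (ρ / 2)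
    (by positivity) (by positivity) (fun x => by
      have := mul_le_mul_of_nonneg_left (Ff_lower x) (show 0 ≤ ρ / 2 by positivity)
      linarith) (by
      have := Ff_lim.const_mul (ρ / 2)
      convert this using 2
      · ring
      · ring)
  have hM : ∀ l, Ma ρ σ l = σ * ⨆ x, (l * x - ρ / 2 * Ff x) := by
    intro l
    unfold Ma
    rw [Real.mul_iSup_of_nonneg hσ.le]
    refine (Equiv.iSup_congr (Equiv.mulLeft₀ σ hσ.ne') fun x => ?_).symm
    simp only [Equiv.mulLeft₀_apply, φa, Ff]
    have e1 : σ * x / σ = x := by field_simp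
    have e2 : -(σ * x) / σ = -x := by field_simp
    rw [e1, e2]; ring
  have := key.const_mul σ
  refine (this.congr fun l => ?_).trans (le_of_eq ?_)
  · rw [hM]
    have : σ * l ^ 2 / (2 * ρ * √π) = σ * (l ^ 2 / (4 * (ρ / 2 * √π))) := by
      field_simp; norm_num
    rw [this]; ring
  · congr 1
    have h4 : π = √π ^ 2 := hqq.symm
    generalize √π = q at *
    rw [h4]
    field_simp
    ring
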